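/- Let j ≥ 2. In W = Λ^{2j} ℚ^{4j−1} with the permutation action of S_{4j−1} and the submodule K generated by ρ, the following three vectors all lie in K: (i) e_1 ∧ e_2 ∧ S + e_1 ∧ e_2 ∧ e_3 ∧ S_1, (ii) e_1 ∧ e_3 ∧ S − e_1 ∧ e_2 ∧ e_3 ∧ S_1, and (iii) e_2 ∧ e_3 ∧ S + e_1 ∧ e_2 ∧ e_3 ∧ S_1. -/

import Mathlib

set_option synthInstance.maxHeartbeats 1000000
set_option maxHeartbeats 1000000

noncomputable section

open ExteriorAlgebra

/-- The standard basis vector `e_{m+1}` of `ℚ^{4j−1}` (with `0`-based index `m`). -/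
def ε (j : ℕ) (m : Fin (4*j-1)) : Fin (4*j-1) → ℚ := Pi.single m 1

/-- The action of `S_N` on the exterior algebra of `ℚ^N` induced by permuting the standard
basis vectors (`g` sends `e_m` to `e_{g m}`). -/
def pact (N : ℕ) (g : Equiv.Perm (Fin N)) :
    ExteriorAlgebra ℚ (Fin N → ℚ) →ₗ[ℚ] ExteriorAlgebra ℚ (Fin N → ℚ) :=
  (ExteriorAlgebra.map (LinearMap.funLeft ℚ ℚ ⇑g⁻¹)).toLinearMap

/-- The element of the `i`-th loop `B_i = {2i+2, 2i+3}` (1-indexed; here `i` is `0`-based)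
selected by the Boolean `b`. -/
def idx (j : ℕ) (k : Fin (2*j-2)) (b : Bool) : Fin (4*j-1) :=
  ⟨2*(k : ℕ) + 3 + b.toNat, by have := Bool.toNat_lt b; omega⟩

/-- `S_I`: the sum, over all choices of one element `s_i ∈ B_i` for each loop `i ∉ I`, of the
wedge products `e_{s_{i_1}} ∧ ⋯ ∧ e_{s_{i_m}}` taken in increasing order of the loop indices
`i ∉ I`. -/
def SI (j : ℕ) (I : Finset (Fin (2*j-2))) : ExteriorAlgebra ℚ (Fin (4*j-1) → ℚ) :=
  ∑ c ∈ Finset.univ.filter (fun c : Fin (2*j-2) → Bool => ∀ i ∈ I, c i = false),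
    (List.ofFn fun k : Fin (2*j-2) =>
      if k ∈ I then 1 else ExteriorAlgebra.ι ℚ (ε j (idx j k (c k)))).prod

/-- The wedge `e_{2j} ∧ e_{2j+1} ∧ ⋯ ∧ e_{4j−1}`. -/
def ρbase (j : ℕ) : ExteriorAlgebra ℚ (Fin (4*j-1) → ℚ) :=
  (List.ofFn fun k : Fin (2*j) =>
    ExteriorAlgebra.ι ℚ (ε j ⟨2*j - 1 + (k : ℕ), by omega⟩)).prod

/-- `ρ = (1 + ∑_{i=1}^{2j−1} (i 2j)) · (e_{2j} ∧ e_{2j+1} ∧ ⋯ ∧ e_{4j−1})`. -/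
def ρElt (j : ℕ) : ExteriorAlgebra ℚ (Fin (4*j-1) → ℚ) :=
  ρbase j + ∑ m : Fin (2*j-1),
    pact (4*j-1) (Equiv.swap (⟨(m : ℕ), by omega⟩ : Fin (4*j-1)) ⟨2*j - 1, by have := m.isLt; omega⟩) (ρbase j)

/-- `K`: the `ℚ[S_{4j−1}]`-submodule of `W = Λ^{2j} ℚ^{4j−1}` generated by `ρ`, i.e. the span
of the `S_{4j−1}`-orbit of `ρ`. -/
def Ksub (j : ℕ) : Submodule ℚ (ExteriorAlgebra ℚ (Fin (4*j-1) → ℚ)) :=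
  Submodule.span ℚ (Set.range fun g : Equiv.Perm (Fin (4*j-1)) => pact (4*j-1) g (ρElt j))

end

noncomputable section

/-- `e_{m+1}` as an element of the exterior algebra. -/
def E (j : ℕ) (m : Fin (4*j-1)) : ExteriorAlgebra ℚ (Fin (4*j-1) → ℚ) :=
  ExteriorAlgebra.ι ℚ (ε j m)

end

noncomputable section

theorem exists_perm_ext {α β : Type*} [Finite α] (f g : β → α) (hf : Function.Injective f)
    (hg : Function.Injective g) : ∃ σ : Equiv.Perm α, ∀ i, σ (f i) = g i := by
  classical
  obtain ⟨_⟩ := nonempty_fintype α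
  let e : {x // x ∈ Set.range f} ≃ {x // x ∈ Set.range g} :=
    (Equiv.ofInjective f hf).symm.trans (Equiv.ofInjective g hg)
  refine ⟨e.extendSubtype, fun i => ?_⟩
  rw [Equiv.extendSubtype_apply_of_mem e (f i) ⟨i, rfl⟩]
  have : (Equiv.ofInjective f hf).symm ⟨f i, ⟨i, rfl⟩⟩ = i := Equiv.ofInjective_symm_apply hf i
  simp [e, this]

theorem prod_ofFn_head {A : Type*} [Monoid A] (n m : ℕ) (h : n = m + 1) (f : Fin n → A) :
    (List.ofFn f).prod = f ⟨0, by omega⟩ *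
      (List.ofFn fun k : Fin m => f ⟨(k : ℕ) + 1, by omega⟩).prod := by
  subst h
  rw [List.ofFn_succ, List.prod_cons]
  rfl

theorem sum_fin_split {A : Type*} [AddCommMonoid A] (n a c : ℕ) (h : n = a + 1 + c)
    (f : Fin n → A) :
    ∑ x, f x = (∑ m : Fin a, f ⟨(m : ℕ), by omega⟩) + f ⟨a, by omega⟩ +
      ∑ k : Fin c, f ⟨a + 1 + (k : ℕ), by omega⟩ := by
  subst h
  rw [Fin.sum_univ_add, Fin.sum_univ_castSucc]
  rfl

theorem sum_fin_pairs {A : Type*} [AddCommMonoid A] (m : ℕ) : ∀ (n : ℕ) (h : n = 3 + 2 * m)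
    (f : Fin n → A),
    ∑ x, f x = f ⟨0, by omega⟩ + f ⟨1, by omega⟩ + f ⟨2, by omega⟩ +
      ∑ k : Fin m, (f ⟨2 * (k : ℕ) + 3, by omega⟩ + f ⟨2 * (k : ℕ) + 4, by omega⟩) := by
  induction m with
  | zero =>
    intro n h f
    subst h
    simp [Fin.sum_univ_three]
  | succ m ih =>
    intro n h f
    obtain rfl : n = (3 + 2 * m) + 1 + 1 := by omega
    rw [Fin.sum_univ_castSucc, Fin.sum_univ_castSucc, ih _ rfl, Fin.sum_univ_castSucc (n := m)]
    simp only [add_assoc]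
    congr! 8
    · simp; omega
    · simp; omega

/-- The sum of all the basis vectors. -/
def U (j : ℕ) : ExteriorAlgebra ℚ (Fin (4*j-1) → ℚ) := ∑ x, E j x

theorem pact_E (j : ℕ) (g : Equiv.Perm (Fin (4*j-1))) (m : Fin (4*j-1)) :
    ExteriorAlgebra.map (LinearMap.funLeft ℚ ℚ ⇑g⁻¹) (E j m) = E j (g m) := by
  unfold E ε
  rw [ExteriorAlgebra.map_apply_ι]
  congr 1
  ext x
  simp only [LinearMap.funLeft_apply, Pi.single_apply]
  congr 1
  rw [Equiv.Perm.inv_eq_iff_eq, eq_comm, eq_comm (a := x)]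

theorem pact_U (j : ℕ) (g : Equiv.Perm (Fin (4*j-1))) :
    ExteriorAlgebra.map (LinearMap.funLeft ℚ ℚ ⇑g⁻¹) (U j) = U j := by
  unfold U
  rw [map_sum]
  simp only [pact_E]
  exact Equiv.sum_comp g (E j)

theorem pact_prod (j n : ℕ) (g : Equiv.Perm (Fin (4*j-1))) (t : Fin n → Fin (4*j-1)) :
    ExteriorAlgebra.map (LinearMap.funLeft ℚ ℚ ⇑g⁻¹) (List.ofFn fun k => E j (t k)).prod
      = (List.ofFn fun k => E j (g (t k))).prod := by
  rw [map_list_prod, List.map_ofFn]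
  congr 2
  funext k
  exact pact_E j g _

theorem ι_mul_prod_zero {V : Type*} [AddCommGroup V] [Module ℚ V] (n : ℕ) (v : Fin n → V)
    (k : Fin n) :
    ExteriorAlgebra.ι ℚ (v k) * (List.ofFn fun i => ExteriorAlgebra.ι ℚ (v i)).prod = 0 := by
  exact ExteriorAlgebra.ι_mul_prod_list v k

theorem rho_eq (j : ℕ) (hj : 1 < j) : ρElt j =
    U j * (List.ofFn fun k : Fin (2*j-1) => E j ⟨2*j - 1 + 1 + (k : ℕ), by omega⟩).prod := by
  have hb : ρbase j = E j ⟨2*j-1, by omega⟩ *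
      (List.ofFn fun k : Fin (2*j-1) => E j ⟨2*j - 1 + 1 + (k : ℕ), by omega⟩).prod := by
    unfold ρbase
    rw [prod_ofFn_head (2*j) (2*j-1) (by omega)]
    simp only [E, add_zero, add_assoc, add_comm 1]
  have hU : U j = _ := sum_fin_split (4*j-1) (2*j-1) (2*j-1) (by omega) (E j)
  rw [hU, add_mul, add_mul, Finset.sum_mul, Finset.sum_mul]
  have h0 : ∀ k : Fin (2*j-1), E j ⟨2*j - 1 + 1 + (k : ℕ), by omega⟩ *
      (List.ofFn fun k : Fin (2*j-1) => E j ⟨2*j - 1 + 1 + (k : ℕ), by omega⟩).prod = 0 :=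
    fun k => ι_mul_prod_zero (2*j-1)
      (fun k : Fin (2*j-1) => ε j ⟨2*j - 1 + 1 + (k : ℕ), by omega⟩) k
  simp only [h0, Finset.sum_const_zero, add_zero]
  unfold ρElt
  rw [← hb, add_comm]
  congr 1
  refine Finset.sum_congr rfl fun m _ => ?_
  rw [hb, pact, AlgHom.toLinearMap_apply, map_mul, pact_E, pact_prod, Equiv.swap_apply_right]
  congr 3
  funext k
  rw [Equiv.swap_apply_of_ne_of_ne]
  · have := m.isLt
    simp only [ne_eq, Fin.mk.injEq]; omega
  · simp only [ne_eq, Fin.mk.injEq]; omega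

theorem U_basis_mem (j : ℕ) (hj : 1 < j) (t : Fin (2*j-1) → Fin (4*j-1)) :
    U j * ExteriorAlgebra.ιMulti ℚ (2*j-1) (fun k => ε j (t k)) ∈ Ksub j := by
  by_cases ht : Function.Injective t
  · obtain ⟨g, hg⟩ := exists_perm_ext
      (fun k : Fin (2*j-1) => (⟨2*j - 1 + 1 + (k : ℕ), by omega⟩ : Fin (4*j-1))) t
      (by intro a b h; simpa [Fin.ext_iff] using h) ht
    refine Submodule.subset_span ⟨g, ?_⟩
    simp only
    rw [rho_eq j hj, pact, AlgHom.toLinearMap_apply, map_mul, pact_U, pact_prod,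
      ExteriorAlgebra.ιMulti_apply]
    simp only [hg]
    rfl
  · rw [Function.Injective] at ht
    push Not at ht
    obtain ⟨a, b, hab, hne⟩ := ht
    rw [AlternatingMap.map_eq_zero_of_eq _ _ (by simp only [hab]) hne, mul_zero]
    exact Submodule.zero_mem _

theorem U_mem (j : ℕ) (hj : 1 < j) (v : Fin (2*j-1) → (Fin (4*j-1) → ℚ)) :
    U j * ExteriorAlgebra.ιMulti ℚ (2*j-1) v ∈ Ksub j := by
  have h : (((Ksub j).mkQ ∘ₗ LinearMap.mulLeft ℚ (U j)).compMultilinearMap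
      (ExteriorAlgebra.ιMulti ℚ (2*j-1) (M := Fin (4*j-1) → ℚ)).toMultilinearMap) = 0 := by
    refine Module.Basis.ext_multilinear (fun _ => Pi.basisFun ℚ (Fin (4*j-1))) fun t => ?_
    have := U_basis_mem j hj t
    simpa [ε] using this
  have := congrArg (fun f => f v) h
  simpa using this

theorem U_list_mem (j : ℕ) (hj : 1 < j) (l : List (Fin (4*j-1) → ℚ)) (hl : l.length = 2*j-1) :
    U j * (l.map (ExteriorAlgebra.ι ℚ)).prod ∈ Ksub j := by
  have h := U_mem j hj (fun k => l.get (k.cast hl.symm))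
  rw [ExteriorAlgebra.ιMulti_apply] at h
  convert h using 3
  apply List.ext_get
  · simp [hl]
  · intro n h1 h2
    simp

/-- The sum of the two basis vectors of a loop. -/
def bv (j : ℕ) (k : Fin (2*j-2)) : Fin (4*j-1) → ℚ := ε j (idx j k true) + ε j (idx j k false)

theorem SI_eq (j : ℕ) (I : Finset (Fin (2*j-2))) : SI j I =
    (List.ofFn fun k => if k ∈ I then 1 else ExteriorAlgebra.ι ℚ (bv j k)).prod := by
  have h := MultilinearMap.map_sum_finset
    (MultilinearMap.mkPiAlgebraFin ℚ (2*j-2) (ExteriorAlgebra ℚ (Fin (4*j-1) → ℚ)))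
    (fun k (b : Bool) => if k ∈ I then 1 else ExteriorAlgebra.ι ℚ (ε j (idx j k b)))
    (fun k => if k ∈ I then {false} else Finset.univ)
  simp only [MultilinearMap.mkPiAlgebraFin_apply] at h
  unfold SI
  rw [show (Finset.univ.filter (fun c : Fin (2*j-2) → Bool => ∀ i ∈ I, c i = false))
    = Fintype.piFinset (fun k => if k ∈ I then {false} else Finset.univ) from ?_, ← h]
  · congr 2
    funext k
    by_cases hk : k ∈ I <;> simp [hk, bv]
  · ext c
    simp only [Finset.mem_filter, Finset.mem_univ, true_and, Fintype.mem_piFinset]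
    refine forall_congr' fun k => ?_
    by_cases hk : k ∈ I <;> simp [hk]

/-- The common tail. -/
def P (j : ℕ) : ExteriorAlgebra ℚ (Fin (4*j-1) → ℚ) :=
  (List.ofFn fun k : Fin (2*j-3) => ExteriorAlgebra.ι ℚ (bv j ⟨(k : ℕ) + 1, by omega⟩)).prod

theorem S_eq (j : ℕ) (hj : 1 < j) :
    SI j ∅ = ExteriorAlgebra.ι ℚ (bv j ⟨0, by omega⟩) * P j := by
  rw [SI_eq, prod_ofFn_head (2*j-2) (2*j-3) (by omega)]
  simp [P]

theorem S1_eq (j : ℕ) (hj : 1 < j) : SI j {⟨0, by omega⟩} = P j := by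
  rw [SI_eq, prod_ofFn_head (2*j-2) (2*j-3) (by omega)]
  simp [P]

theorem U_mul_P (j : ℕ) (hj : 1 < j) : U j * P j =
    (E j ⟨0, by omega⟩ + E j ⟨1, by omega⟩ + E j ⟨2, by omega⟩
      + ExteriorAlgebra.ι ℚ (bv j ⟨0, by omega⟩)) * P j := by
  have h := sum_fin_pairs (2*j-2) (4*j-1) (by omega) (E j)
  have h2 : ∀ k : Fin (2*j-2), E j ⟨2 * (k : ℕ) + 3, by omega⟩ + E j ⟨2 * (k : ℕ) + 4, by omega⟩
      = ExteriorAlgebra.ι ℚ (bv j k) := by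
    intro k
    rw [bv, map_add, add_comm]
    rfl
  simp only [h2] at h
  have h3 : ∑ k : Fin (2*j-2), ExteriorAlgebra.ι ℚ (bv j k)
      = ExteriorAlgebra.ι ℚ (bv j ⟨0, by omega⟩)
        + ∑ k : Fin (2*j-3), ExteriorAlgebra.ι ℚ (bv j ⟨(k : ℕ) + 1, by omega⟩) := by
    have := sum_fin_split (2*j-2) 0 (2*j-3) (by omega) (fun k => ExteriorAlgebra.ι ℚ (bv j k))
    rw [this]
    simp [add_comm]
  have h4 : (∑ k : Fin (2*j-3), ExteriorAlgebra.ι ℚ (bv j ⟨(k : ℕ) + 1, by omega⟩)) * P j = 0 := by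
    rw [Finset.sum_mul]
    exact Finset.sum_eq_zero fun k _ =>
      ι_mul_prod_zero (2*j-3) (fun k : Fin (2*j-3) => bv j ⟨(k : ℕ) + 1, by omega⟩) k
  rw [U, h, h3, ← add_assoc, add_mul, h4, add_zero]

theorem E_sq (j : ℕ) (a : Fin (4*j-1)) : E j a * E j a = 0 := ExteriorAlgebra.ι_sq_zero _

theorem E_anti (j : ℕ) (a b : Fin (4*j-1)) : E j a * E j b = - (E j b * E j a) :=
  eq_neg_of_add_eq_zero_left (ExteriorAlgebra.ι_add_mul_swap _ _)

theorem U_comm (j : ℕ) (a : Fin (4*j-1)) : U j * E j a = - (E j a * U j) := by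
  rw [U, Finset.sum_mul, Finset.mul_sum, ← Finset.sum_neg_distrib]
  exact Finset.sum_congr rfl fun x _ => E_anti j x a

theorem key (j : ℕ) (hj : 1 < j) (a b : Fin (4*j-1)) :
    E j a * E j b * ((E j ⟨0, by omega⟩ + E j ⟨1, by omega⟩ + E j ⟨2, by omega⟩
      + ExteriorAlgebra.ι ℚ (bv j ⟨0, by omega⟩)) * P j) ∈ Ksub j := by
  rw [← U_mul_P j hj]
  have h := U_list_mem j hj (ε j a :: ε j b ::
    List.ofFn fun k : Fin (2*j-3) => bv j ⟨(k : ℕ) + 1, by omega⟩) (by simp; omega)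
  rw [List.map_cons, List.map_cons, List.prod_cons, List.prod_cons, List.map_ofFn] at h
  change U j * (E j a * (E j b * P j)) ∈ Ksub j at h
  have e : U j * (E j a * (E j b * P j)) = E j a * E j b * (U j * P j) := by
    rw [← mul_assoc, U_comm, neg_mul, mul_assoc, ← mul_assoc (U j), U_comm]
    simp only [neg_mul, mul_neg, neg_neg, mul_assoc]
  rwa [e] at h

theorem E_mid (j : ℕ) (a b : Fin (4*j-1)) : E j a * E j b * E j a = 0 := by
  rw [mul_assoc, E_anti j b a, mul_neg, ← mul_assoc, E_sq, zero_mul, neg_zero]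

theorem E_end (j : ℕ) (a b : Fin (4*j-1)) : E j a * E j b * E j b = 0 := by
  rw [mul_assoc, E_sq, mul_zero]

end

/-- For `j ≥ 2`, in `W = Λ^{2j} ℚ^{4j−1}` with the permutation action of
`S_{4j−1}` and the submodule `K` generated by `ρ`, the three vectors
`e₁∧e₂∧S + e₁∧e₂∧e₃∧S₁`, `e₁∧e₃∧S − e₁∧e₂∧e₃∧S₁` and `e₂∧e₃∧S + e₁∧e₂∧e₃∧S₁`
all lie in `K`. -/
theorem stmt8 (j : ℕ) (hj : 2 ≤ j) :
    (E j ⟨0, by omega⟩ * E j ⟨1, by omega⟩ * SI j ∅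
        + E j ⟨0, by omega⟩ * E j ⟨1, by omega⟩ * E j ⟨2, by omega⟩ * SI j {⟨0, by omega⟩}
      ∈ Ksub j) ∧
    (E j ⟨0, by omega⟩ * E j ⟨2, by omega⟩ * SI j ∅
        - E j ⟨0, by omega⟩ * E j ⟨1, by omega⟩ * E j ⟨2, by omega⟩ * SI j {⟨0, by omega⟩}
      ∈ Ksub j) ∧
    (E j ⟨1, by omega⟩ * E j ⟨2, by omega⟩ * SI j ∅
        + E j ⟨0, by omega⟩ * E j ⟨1, by omega⟩ * E j ⟨2, by omega⟩ * SI j {⟨0, by omega⟩}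
      ∈ Ksub j) := by
  rw [S_eq j hj, S1_eq j hj]
  refine ⟨?_, ?_, ?_⟩
  · convert key j hj ⟨0, by omega⟩ ⟨1, by omega⟩ using 1
    rw [← mul_assoc, ← mul_assoc, mul_add, mul_add, mul_add, E_mid, E_end, zero_add, zero_add,
      add_mul, add_comm]
  · convert key j hj ⟨0, by omega⟩ ⟨2, by omega⟩ using 1
    rw [← mul_assoc, ← mul_assoc, mul_add, mul_add, mul_add, E_mid, E_end, zero_add, add_zero,
      add_mul, mul_assoc (E j ⟨0, _⟩) (E j ⟨2, _⟩) (E j ⟨1, _⟩), E_anti j ⟨2, _⟩ ⟨1, _⟩,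
      mul_neg, neg_mul, ← mul_assoc (E j ⟨0, _⟩) (E j ⟨1, _⟩) (E j ⟨2, _⟩)]
    abel
  · convert key j hj ⟨1, by omega⟩ ⟨2, by omega⟩ using 1
    rw [← mul_assoc, ← mul_assoc, mul_add, mul_add, mul_add, E_mid, E_end, add_zero, add_zero,
      add_mul, mul_assoc (E j ⟨1, _⟩) (E j ⟨2, _⟩) (E j ⟨0, _⟩), E_anti j ⟨2, _⟩ ⟨0, _⟩,
      mul_neg, ← mul_assoc (E j ⟨1, _⟩), E_anti j ⟨1, _⟩ ⟨0, _⟩]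
    simp only [neg_mul, neg_neg]
    rw [add_comm]
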